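/- Let γ_t denote the Gaussian probability measure on ℝ with mean 0 and variance t > 0. There exist constants C > 0 and A > 0 such that for every t > 0 and all θ₁, θ₂ with 0 ≤ θ₁ ≤ θ₂ ≤ 2π: | γ_t({x ∈ ℝ : ∃ k ∈ ℤ, θ₁ ≤ x − 2πk ≤ θ₂}) − (θ₂ − θ₁)/(2π) | ≤ C·exp(−A·t). -/

import Mathlib

open MeasureTheory ProbabilityTheory Filter Topology Real

/-!
A finite measure on the circle whose Fourier coefficients are summable has the sum of its Fourier
series as density with respect to Haar measure, because the two sides integrate every character
equally and characters span a dense subspace of the continuous functions. The density differs from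
its zeroth coefficient by at most the sum of the other coefficients, which bounds the distance to
the uniform distribution.

The Fourier coefficients of a Gaussian of variance `v` wrapped around a circle of length `T` are
values of its characteristic function, of modulus `r ^ n ^ 2` with `r = exp (-2π²v / T²)`. Hence the
distance to uniform is at most `2 * (r + r ^ 4 + r ^ 9 + ⋯) ≤ 2 * r / (1 - r)`, and it is trivially
at most `1`; in either range of `r` it is at most `3 * r`.
-/

open AddCircle
open scoped BoundedContinuousFunction

section Density

variable {X : Type*} [TopologicalSpace X] [MeasurableSpace X] [BorelSpace X]

lemma measureReal_eq_setIntegral_of_forall_integral_eq [HasOuterApproxClosed X] {μ ν : Measure X}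
    [IsFiniteMeasure μ] [IsFiniteMeasure ν] {f : X →ᵇ ℝ}
    (h : ∀ g : X →ᵇ ℝ, ∫ x, g x ∂μ = ∫ x, g x * f x ∂ν) {s : Set X} (hs : MeasurableSet s) :
    μ.real s = ∫ x in s, f x ∂ν := by
  have hnonneg (x : X) : 0 ≤ ‖f‖ + f x := by linarith [neg_le_of_abs_le (f.norm_coe_le_norm x)]
  have hint : Integrable (fun x ↦ ‖f‖ + f x) ν := (integrable_const _).add (f.integrable ν)
  have : IsFiniteMeasure (ν.withDensity fun x ↦ ENNReal.ofReal (‖f‖ + f x)) :=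
    isFiniteMeasure_withDensity_ofReal hint.2
  -- `withDensity` needs a nonnegative density, so both measures are shifted by `‖f‖ • ν`.
  have shifted : μ + ‖f‖₊ • ν = ν.withDensity fun x ↦ ENNReal.ofReal (‖f‖ + f x) := by
    refine ext_of_forall_integral_eq_of_IsFiniteMeasure fun g ↦ ?_
    rw [integral_add_measure (g.integrable _) (g.integrable _), integral_smul_nnreal_measure, h,
      integral_withDensity_eq_integral_toReal_smul (by fun_prop) (by simp), NNReal.smul_def,
      coe_nnnorm, smul_eq_mul, ← integral_const_mul,
      ← integral_add (f := fun x ↦ g x * f x) ((g * f).integrable ν)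
        ((g.integrable ν).const_mul _)]
    congr 1 with x
    rw [ENNReal.toReal_ofReal (hnonneg x), smul_eq_mul]
    ring
  have hμs : μ.real s + ‖f‖ * ν.real s = ∫ x in s, (‖f‖ + f x) ∂ν := by
    rw [integral_eq_lintegral_of_nonneg_ae (.of_forall hnonneg) (by fun_prop),
      ← withDensity_apply _ hs, ← shifted]
    simp [Measure.real, ENNReal.toReal_add, ENNReal.mul_eq_top]
  rw [integral_add (integrable_const _) (f.integrable _), setIntegral_const, smul_eq_mul,
    mul_comm] at hμs
  linarith

variable [CompactSpace X] [SecondCountableTopologyEither X ℂ]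

/-- Integration against a finite measure as a continuous linear functional on the complex-valued
continuous functions on a compact space. -/
noncomputable def continuousMapIntegralCLM (μ : Measure X) [IsFiniteMeasure μ] : C(X, ℂ) →L[ℂ] ℂ :=
  L1.integralCLM' ℂ ∘L ContinuousMap.toLp 1 μ ℂ

lemma continuousMapIntegralCLM_apply (μ : Measure X) [IsFiniteMeasure μ] (g : C(X, ℂ)) :
    continuousMapIntegralCLM μ g = ∫ x, g x ∂μ := by
  rw [continuousMapIntegralCLM, ContinuousLinearMap.comp_apply, ← L1.integral_eq',
    L1.integral_eq_integral]
  exact integral_congr_ae (ContinuousMap.coeFn_toLp μ g)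

end Density

section FourierStieltjes

variable {T : ℝ}

/-- The `n`-th Fourier–Stieltjes coefficient of a measure on the circle, with the sign convention of
`fourierCoeff`. -/
noncomputable def fourierStieltjesCoeff (μ : Measure (AddCircle T)) (n : ℤ) : ℂ :=
  ∫ x, fourier (-n) x ∂μ

lemma fourierStieltjesCoeff_map_coe (μ : Measure ℝ) (n : ℤ) :
    fourierStieltjesCoeff (μ.map ((↑) : ℝ → AddCircle T)) n = charFun μ (-(2 * π * n / T)) := by
  rw [fourierStieltjesCoeff, integral_map AddCircle.measurable_mk'.aemeasurable (by fun_prop),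
    charFun_apply_real]
  congr 1 with x
  rw [fourier_coe_apply]
  push_cast
  ring_nf

variable {μ : Measure (AddCircle T)}

lemma fourierStieltjesCoeff_zero : fourierStieltjesCoeff μ 0 = μ.real Set.univ := by
  simp [fourierStieltjesCoeff]

lemma norm_fourierStieltjesCoeff_neg (n : ℤ) :
    ‖fourierStieltjesCoeff μ (-n)‖ = ‖fourierStieltjesCoeff μ n‖ := by
  simp_rw [fourierStieltjesCoeff, fourier_neg (n := -n), integral_conj, RCLike.norm_conj]

lemma summable_norm_fourierStieltjesCoeff
    (hμ : Summable fun n : ℕ ↦ ‖fourierStieltjesCoeff μ (n + 1)‖) :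
    Summable fun n : ℤ ↦ ‖fourierStieltjesCoeff μ n‖ :=
  .of_add_one_of_neg_add_one hμ (by simpa only [norm_fourierStieltjesCoeff_neg] using hμ)

variable [Fact (0 < T)]

/-- The Fourier series of a measure on the circle, summed in the uniform norm. It is meaningful when
the coefficients are absolutely summable; a non-summable series has the value `0`. -/
noncomputable def fourierStieltjesSeries (μ : Measure (AddCircle T)) : C(AddCircle T, ℂ) :=
  ∑' n : ℤ, fourierStieltjesCoeff μ n • fourier n

lemma norm_fourierStieltjesCoeff_smul_fourier (n : ℤ) :
    ‖fourierStieltjesCoeff μ n • (fourier n : C(AddCircle T, ℂ))‖ =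
      ‖fourierStieltjesCoeff μ n‖ := by
  rw [norm_smul, fourier_norm, mul_one]

lemma norm_fourierStieltjesSeries_sub_le
    (hμ : Summable fun n : ℕ ↦ ‖fourierStieltjesCoeff μ (n + 1)‖) :
    ‖fourierStieltjesSeries μ - fourierStieltjesCoeff μ 0 • fourier 0‖ ≤
      2 * ∑' n : ℕ, ‖fourierStieltjesCoeff μ (n + 1)‖ := by
  have hpos (n : ℕ) : ‖fourierStieltjesCoeff μ (n + 1) • (fourier (n + 1) : C(AddCircle T, ℂ))‖ ≤
      ‖fourierStieltjesCoeff μ (n + 1)‖ := (norm_fourierStieltjesCoeff_smul_fourier _).le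
  have hneg (n : ℕ) :
      ‖fourierStieltjesCoeff μ (-(n + 1)) • (fourier (-(n + 1)) : C(AddCircle T, ℂ))‖ ≤
        ‖fourierStieltjesCoeff μ (n + 1)‖ := by
    rw [norm_fourierStieltjesCoeff_smul_fourier, norm_fourierStieltjesCoeff_neg]
  rw [fourierStieltjesSeries, tsum_of_add_one_of_neg_add_one (.of_norm_bounded hμ hpos)
    (.of_norm_bounded hμ hneg), add_sub_right_comm, add_sub_cancel_right, two_mul]
  exact (norm_add_le _ _).trans <| add_le_add (tsum_of_norm_bounded hμ.hasSum hpos)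
    (tsum_of_norm_bounded hμ.hasSum hneg)

lemma integral_fourier_mul_fourier (m n : ℤ) :
    ∫ x : AddCircle T, fourier m x * fourier n x ∂haarAddCircle = if n = -m then 1 else 0 := by
  have h := congrFun (fourierCoeff_fourier (T := T) n) (-m)
  simpa only [fourierCoeff, neg_neg, smul_eq_mul, Pi.single_apply, eq_comm] using h

lemma integral_fourier_mul_fourierStieltjesSeries
    (hμ : Summable fun n : ℤ ↦ ‖fourierStieltjesCoeff μ n‖) (m : ℤ) :
    ∫ x, fourier m x * fourierStieltjesSeries μ x ∂haarAddCircle =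
      fourierStieltjesCoeff μ (-m) := by
  have hsum : Summable fun n : ℤ ↦ fourierStieltjesCoeff μ n • (fourier n : C(AddCircle T, ℂ)) :=
    .of_norm (by simpa only [norm_fourierStieltjesCoeff_smul_fourier] using hμ)
  let L : C(AddCircle T, ℂ) →L[ℂ] ℂ := continuousMapIntegralCLM haarAddCircle ∘L
    ContinuousLinearMap.mul ℂ C(AddCircle T, ℂ) (fourier m)
  have hL (g : C(AddCircle T, ℂ)) : L g = ∫ x, fourier m x * g x ∂haarAddCircle :=
    continuousMapIntegralCLM_apply haarAddCircle (fourier m * g)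
  calc ∫ x, fourier m x * fourierStieltjesSeries μ x ∂haarAddCircle
      = L (fourierStieltjesSeries μ) := (hL _).symm
    _ = ∑' n : ℤ, L (fourierStieltjesCoeff μ n • fourier n) := L.map_tsum hsum
    _ = ∑' n : ℤ, fourierStieltjesCoeff μ n * if n = -m then 1 else 0 := by
        simp_rw [map_smul, hL, integral_fourier_mul_fourier, smul_eq_mul]
    _ = fourierStieltjesCoeff μ (-m) := by simp only [mul_ite, mul_one, mul_zero, tsum_ite_eq]

variable [IsFiniteMeasure μ]

lemma integral_eq_integral_mul_fourierStieltjesSeries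
    (hμ : Summable fun n : ℤ ↦ ‖fourierStieltjesCoeff μ n‖) (g : C(AddCircle T, ℂ)) :
    ∫ x, g x ∂μ = ∫ x, g x * fourierStieltjesSeries μ x ∂haarAddCircle := by
  let L : C(AddCircle T, ℂ) →L[ℂ] ℂ := continuousMapIntegralCLM haarAddCircle ∘L
    (ContinuousLinearMap.mul ℂ C(AddCircle T, ℂ)).flip (fourierStieltjesSeries μ)
  have hL (g : C(AddCircle T, ℂ)) :
      L g = ∫ x, g x * fourierStieltjesSeries μ x ∂haarAddCircle :=
    continuousMapIntegralCLM_apply haarAddCircle (g * fourierStieltjesSeries μ)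
  suffices continuousMapIntegralCLM μ = L by rw [← hL, ← this, continuousMapIntegralCLM_apply]
  refine ContinuousLinearMap.ext_on
    (Submodule.dense_iff_topologicalClosure_eq_top.2 span_fourier_closure_eq_top) ?_
  rintro _ ⟨m, rfl⟩
  rw [hL, integral_fourier_mul_fourierStieltjesSeries hμ, continuousMapIntegralCLM_apply,
    fourierStieltjesCoeff, neg_neg]

lemma measureReal_eq_setIntegral_re_fourierStieltjesSeries
    (hμ : Summable fun n : ℤ ↦ ‖fourierStieltjesCoeff μ n‖)
    {s : Set (AddCircle T)} (hs : MeasurableSet s) :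
    μ.real s = ∫ x in s, (fourierStieltjesSeries μ x).re ∂haarAddCircle := by
  let f : AddCircle T →ᵇ ℝ :=
    .mkOfCompact ⟨fun x ↦ (fourierStieltjesSeries μ x).re, by fun_prop⟩
  refine measureReal_eq_setIntegral_of_forall_integral_eq (f := f) (fun g ↦ ?_) hs
  have hint : Integrable (fun x ↦ (g x : ℂ) * fourierStieltjesSeries μ x) haarAddCircle :=
    Continuous.integrable_of_hasCompactSupport (by fun_prop) (.of_compactSpace _)
  calc ∫ x, g x ∂μ = (∫ x, (g x : ℂ) ∂μ).re := by rw [integral_complex_ofReal, Complex.ofReal_re]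
    _ = (∫ x, (g x : ℂ) * fourierStieltjesSeries μ x ∂haarAddCircle).re :=
        congrArg Complex.re <|
          integral_eq_integral_mul_fourierStieltjesSeries hμ ⟨fun x ↦ (g x : ℂ), by fun_prop⟩
    _ = ∫ x, ((g x : ℂ) * fourierStieltjesSeries μ x).re ∂haarAddCircle := (integral_re hint).symm
    _ = ∫ x, g x * f x ∂haarAddCircle := by simp_rw [Complex.re_ofReal_mul]; rfl

theorem abs_measureReal_sub_haarAddCircle_le
    (hμ : Summable fun n : ℕ ↦ ‖fourierStieltjesCoeff μ (n + 1)‖)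
    {s : Set (AddCircle T)} (hs : MeasurableSet s) :
    |μ.real s - μ.real Set.univ * haarAddCircle.real s| ≤
      2 * (∑' n : ℕ, ‖fourierStieltjesCoeff μ (n + 1)‖) * haarAddCircle.real s := by
  have hbound (x : AddCircle T) : ‖(fourierStieltjesSeries μ x).re - μ.real Set.univ‖ ≤
      2 * ∑' n : ℕ, ‖fourierStieltjesCoeff μ (n + 1)‖ :=
    calc ‖(fourierStieltjesSeries μ x).re - μ.real Set.univ‖
        ≤ ‖fourierStieltjesSeries μ x - μ.real Set.univ‖ := by
          simpa only [Complex.sub_re, Complex.ofReal_re, Real.norm_eq_abs] using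
            Complex.abs_re_le_norm (fourierStieltjesSeries μ x - μ.real Set.univ)
      _ = ‖(fourierStieltjesSeries μ -
            fourierStieltjesCoeff μ 0 • fourier 0 : C(AddCircle T, ℂ)) x‖ := by
          simp [fourierStieltjesCoeff_zero]
      _ ≤ _ := (ContinuousMap.norm_coe_le_norm _ x).trans (norm_fourierStieltjesSeries_sub_le hμ)
  have hint : Integrable (fun x ↦ (fourierStieltjesSeries μ x).re) haarAddCircle :=
    Continuous.integrable_of_hasCompactSupport (by fun_prop) (.of_compactSpace _)
  have hsub : μ.real s - μ.real Set.univ * haarAddCircle.real s =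
      ∫ x in s, ((fourierStieltjesSeries μ x).re - μ.real Set.univ) ∂haarAddCircle := by
    rw [integral_sub hint.integrableOn (integrable_const _), setIntegral_const,
      measureReal_eq_setIntegral_re_fourierStieltjesSeries
        (summable_norm_fourierStieltjesCoeff hμ) hs, smul_eq_mul, mul_comm]
  rw [hsub, ← Real.norm_eq_abs]
  exact norm_setIntegral_le_of_norm_le_const (measure_lt_top _ _) fun x _ ↦ hbound x

end FourierStieltjes

section Arcs

variable {T : ℝ}

lemma setOf_exists_int_sub_mem_Icc_eq_preimage_closedBall (a b : ℝ) :
    {x : ℝ | ∃ k : ℤ, a ≤ x - T * k ∧ x - T * k ≤ b} =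
      (↑) ⁻¹' Metric.closedBall (((a + b) / 2 : ℝ) : AddCircle T) ((b - a) / 2) := by
  ext x
  simp only [coe_real_preimage_closedBall_eq_iUnion, Real.closedBall_eq_Icc, Set.mem_iUnion,
    Set.mem_Icc, Set.mem_ofPred_eq, zsmul_eq_mul]
  refine exists_congr fun k ↦ and_congr ?_ ?_ <;> constructor <;> intro h <;> linarith

lemma haarAddCircle_real_closedBall [hT : Fact (0 < T)] (x : AddCircle T) {ε : ℝ} (hε : 0 ≤ ε) :
    haarAddCircle.real (Metric.closedBall x ε) = min T (2 * ε) / T := by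
  have hvol := congrArg ENNReal.toReal (AddCircle.volume_closedBall T (x := x) ε)
  rw [volume_eq_smul_haarAddCircle, Measure.smul_apply, smul_eq_mul, ENNReal.toReal_mul,
    ENNReal.toReal_ofReal hT.out.le,
    ENNReal.toReal_ofReal (le_min hT.out.le (by positivity))] at hvol
  rwa [eq_div_iff hT.out.ne', mul_comm]

lemma haarAddCircle_real_closedBall_midpoint [Fact (0 < T)] {a b : ℝ} (hab : a ≤ b)
    (hbT : b ≤ a + T) :
    haarAddCircle.real (Metric.closedBall (((a + b) / 2 : ℝ) : AddCircle T) ((b - a) / 2)) =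
      (b - a) / T := by
  rw [haarAddCircle_real_closedBall _ (by linarith), mul_div_cancel₀ _ two_ne_zero,
    min_eq_right (by linarith)]

end Arcs

lemma pow_succ_sq_le_pow_succ {r : ℝ} (h₀ : 0 ≤ r) (h₁ : r ≤ 1) (n : ℕ) :
    r ^ (n + 1) ^ 2 ≤ r ^ (n + 1) :=
  pow_le_pow_of_le_one h₀ h₁ (Nat.le_self_pow two_ne_zero _)

lemma hasSum_pow_succ {r : ℝ} (h₀ : 0 ≤ r) (h₁ : r < 1) :
    HasSum (fun n : ℕ ↦ r ^ (n + 1)) (r / (1 - r)) := by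
  simpa only [pow_succ', div_eq_mul_inv] using (hasSum_geometric_of_lt_one h₀ h₁).mul_left r

lemma summable_pow_succ_sq {r : ℝ} (h₀ : 0 ≤ r) (h₁ : r < 1) :
    Summable fun n : ℕ ↦ r ^ (n + 1) ^ 2 :=
  (hasSum_pow_succ h₀ h₁).summable.of_nonneg_of_le (fun n ↦ by positivity)
    (pow_succ_sq_le_pow_succ h₀ h₁.le)

lemma tsum_pow_succ_sq_le {r : ℝ} (h₀ : 0 ≤ r) (h₁ : r < 1) :
    ∑' n : ℕ, r ^ (n + 1) ^ 2 ≤ r / (1 - r) :=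
  hasSum_le (pow_succ_sq_le_pow_succ h₀ h₁.le) (summable_pow_succ_sq h₀ h₁).hasSum
    (hasSum_pow_succ h₀ h₁)

lemma norm_charFun_gaussianReal (m : ℝ) (v : NNReal) (u : ℝ) :
    ‖charFun (gaussianReal m v) u‖ = rexp (-(v * u ^ 2 / 2)) := by
  rw [charFun_gaussianReal, Complex.norm_exp]
  congr 1
  simp [← Complex.ofReal_pow, ← Complex.ofReal_mul]

lemma norm_fourierStieltjesCoeff_gaussianReal (T m : ℝ) (v : NNReal) (n : ℤ) :
    ‖fourierStieltjesCoeff ((gaussianReal m v).map ((↑) : ℝ → AddCircle T)) n‖ =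
      rexp (-(2 * π ^ 2 / T ^ 2) * v) ^ n.natAbs ^ 2 := by
  rw [fourierStieltjesCoeff_map_coe, norm_charFun_gaussianReal, ← exp_nat_mul]
  push_cast [Nat.cast_natAbs]
  rw [sq_abs]
  ring_nf

theorem gaussian_mod_two_pi_equidistribution_general {T : ℝ} [Fact (0 < T)] (m : ℝ) (v : NNReal)
    {s : Set (AddCircle T)} (hs : MeasurableSet s) :
    |(gaussianReal m v).real ((↑) ⁻¹' s) - haarAddCircle.real s| ≤
      3 * rexp (-(2 * π ^ 2 / T ^ 2) * v) := by
  set r := rexp (-(2 * π ^ 2 / T ^ 2) * v)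
  set μ := (gaussianReal m v).map ((↑) : ℝ → AddCircle T)
  have : IsProbabilityMeasure μ :=
    Measure.isProbabilityMeasure_map AddCircle.measurable_mk'.aemeasurable
  have hr₀ : 0 ≤ r := (exp_pos _).le
  rw [← map_measureReal_apply AddCircle.measurable_mk' hs]
  obtain hr | hr := le_or_gt (1 / 3) r
  · calc |μ.real s - haarAddCircle.real s|
        ≤ 1 := abs_sub_le_of_nonneg_of_le measureReal_nonneg measureReal_le_one
          measureReal_nonneg measureReal_le_one
      _ ≤ 3 * r := by linarith
  · have hr₁ : r < 1 := by linarith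
    have hcoeff (n : ℕ) : ‖fourierStieltjesCoeff μ (n + 1)‖ = r ^ (n + 1) ^ 2 :=
      norm_fourierStieltjesCoeff_gaussianReal T m v (n + 1)
    have hbound := abs_measureReal_sub_haarAddCircle_le (μ := μ)
      (by simpa only [hcoeff] using summable_pow_succ_sq hr₀ hr₁) hs
    simp only [hcoeff, probReal_univ, one_mul] at hbound
    calc |μ.real s - haarAddCircle.real s|
        ≤ 2 * (∑' n : ℕ, r ^ (n + 1) ^ 2) * haarAddCircle.real s := hbound
      _ ≤ 2 * ∑' n : ℕ, r ^ (n + 1) ^ 2 :=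
          mul_le_of_le_one_right (by positivity) measureReal_le_one
      _ ≤ 2 * (r / (1 - r)) := by gcongr; exact tsum_pow_succ_sq_le hr₀ hr₁
      _ ≤ 3 * r := by
          rw [mul_div_assoc', div_le_iff₀ (by linarith)]
          nlinarith

/-- exponential equidistribution modulo 2π of the centered Gaussian
measure with variance t, uniformly over arcs [θ₁, θ₂] ⊆ [0, 2π]. -/
theorem gaussian_mod_two_pi_equidistribution :
    ∃ C > (0:ℝ), ∃ A > (0:ℝ), ∀ t : NNReal, 0 < t →
      ∀ θ₁ θ₂ : ℝ, 0 ≤ θ₁ → θ₁ ≤ θ₂ → θ₂ ≤ 2 * π →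
        |(gaussianReal 0 t {x : ℝ | ∃ k : ℤ,
            θ₁ ≤ x - 2 * π * k ∧ x - 2 * π * k ≤ θ₂}).toReal -
          (θ₂ - θ₁) / (2 * π)| ≤ C * Real.exp (-A * t) := by
  have : Fact (0 < 2 * π) := ⟨two_pi_pos⟩
  refine ⟨3, by norm_num, 2 * π ^ 2 / (2 * π) ^ 2, by positivity, fun t _ θ₁ θ₂ h₀ h₁₂ h₂ ↦ ?_⟩
  rw [setOf_exists_int_sub_mem_Icc_eq_preimage_closedBall,
    ← haarAddCircle_real_closedBall_midpoint (T := 2 * π) h₁₂ (by linarith)]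
  exact gaussian_mod_two_pi_equidistribution_general 0 t Metric.isClosed_closedBall.measurableSet
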